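/- For every c with 0 ≤ c < 2 there exists exactly one twice continuously differentiable function u : (−∞, 0] → ℝ satisfying u''(z) + c u'(z) + u(z)(1 − u(z)) = 0 for all z ≤ 0, u(0) = 0, u'(z) → 0 as z → −∞, u(z) → 1 as z → −∞, and u(z) > 0 together with u'(z) < 0 for all z < 0. -/

import Mathlib

/-!
Existence is proved by shooting and uniqueness by the phase plane. Put `t = -z` and `p = -u'`, so
that a wave is a solution of `u' = p`, `p' = c p - u (1 - u)` on `t ≥ 0` with `u 0 = 0`, `p > 0`,
`u → 1` and `p → 0` (`Profile`).

*Existence.* Start at `(0, a)` with `a > 0`. The field is first truncated to a bounded, globally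
Lipschitz one (`clampedField`), so that orbits exist for all times and depend continuously on `a`.
The set of `a` for which `p` becomes negative while `u < 1` (`Turns`) and the set of `a` for which
`u` exceeds `1` while `p > 0` (`Escapes`) are open and disjoint. The value `17` belongs to the second.
The first contains small values of `a`: this is where `c < 2` is used, since the
linearisation at the origin then rotates, and a Sturm comparison with `exp (c t / 2) * sin (ω t)`
forces `p` to change sign (`exists_turns`). By connectedness some `a` is in neither set; its orbit
stays in `0 < p`, `u < 1` (`Orbit.trapped`), and since `u` and `p - c u` are monotone along it, it
converges to an equilibrium, which must be `(1, 0)` (`exists_profile`). As `p - c u` decreases,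
the orbit never meets the truncation.

*Uniqueness.* Along a profile, `u` is strictly increasing, so `p` is a function `P` of `u ∈ (0, 1)`
with `P' = c - x (1 - x) / P`. For two such functions, the difference `E` satisfies
`E' = x (1 - x) E / (P₁ P₂)`, so `E ^ 2` is nondecreasing; it tends to `0` at `x = 1`, hence `E = 0`.
The inverse functions of the two profiles then have the same derivative `1 / P` and the same limit
`0` at `x = 0`, so they agree (`Profile.eqOn`).
-/

open Set Filter

/-- A spreading wave of speed `c` for the Fisher–Stefan equation (d = a = b = 1):
a twice continuously differentiable solution on `(−∞, 0]` of
`u'' + c u' + u(1 − u) = 0` with `u(0) = 0`, `u'(−∞) = 0`, `u(−∞) = 1`,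
which is positive and strictly decreasing (`u > 0`, `u' < 0`) on `(−∞, 0)`. -/
def IsSpreadingWave (c : ℝ) (u : ℝ → ℝ) : Prop :=
  ContDiffOn ℝ 2 u (Iic 0) ∧
  (∀ z ≤ (0 : ℝ),
      derivWithin (derivWithin u (Iic 0)) (Iic 0) z
        + c * derivWithin u (Iic 0) z + u z * (1 - u z) = 0) ∧
  u 0 = 0 ∧
  Tendsto (derivWithin u (Iic 0)) atBot (nhds 0) ∧
  Tendsto u atBot (nhds 1) ∧
  (∀ z < (0 : ℝ), 0 < u z ∧ derivWithin u (Iic 0) z < 0)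

/-! ### Global solutions of bounded Lipschitz equations -/

/-- An autonomous equation with bounded, globally Lipschitz field has global solutions: the
Picard–Lindelöf theorem applies on every interval `[-(n + 1), n + 1]`, and the solutions so obtained
are glued by uniqueness. -/
lemma exists_global_solution {E : Type*} [NormedAddCommGroup E] [NormedSpace ℝ E]
    [CompleteSpace E] {F : E → E} {K L : NNReal} (hF : LipschitzWith K F)
    (hL : ∀ x, ‖F x‖ ≤ L) (x₀ : E) :
    ∃ α : ℝ → E, α 0 = x₀ ∧ ∀ t, HasDerivAt α (F (α t)) t := by
  have key : ∀ n : ℕ, ∃ β : ℝ → E, β 0 = x₀ ∧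
      ∀ t ∈ Ioo (-(n + 1 : ℝ)) (n + 1), HasDerivAt β (F (β t)) t := by
    intro n
    have h0 : (0 : ℝ) ∈ Icc (-(n + 1 : ℝ)) (n + 1) :=
      ⟨by linarith [n.cast_nonneg (α := ℝ)], by positivity⟩
    have hPL : IsPicardLindelof (fun _ : ℝ => F) (⟨0, h0⟩ : Icc (-(n + 1 : ℝ)) (n + 1)) x₀
        (L * (n + 1)) 0 L K :=
      { lipschitzOnWith := fun t _ => hF.lipschitzOnWith
        continuousOn := fun x _ => continuousOn_const
        norm_le := fun t _ x _ => hL x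
        mul_max_le := by simp }
    obtain ⟨β, h1, h2⟩ := hPL.exists_eq_forall_mem_Icc_hasDerivWithinAt₀
    exact ⟨β, h1, fun t ht => (h2 t (Ioo_subset_Icc_self ht)).hasDerivAt
      (Icc_mem_nhds ht.1 ht.2)⟩
  choose β hβ0 hβ using key
  have agree : ∀ m n : ℕ, ∀ t : ℝ, |t| < m + 1 → |t| < n + 1 → β m t = β n t := by
    intro m n t hm hn
    have hr : |t| < min (m + 1 : ℝ) (n + 1) := lt_min hm hn
    have h0 : (0:ℝ) < min (m + 1 : ℝ) (n + 1) := lt_min (by positivity) (by positivity)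
    refine ODE_solution_unique_of_mem_Ioo (v := fun _ => F) (s := fun _ => univ) (K := K)
      (a := -min (m + 1 : ℝ) (n + 1)) (b := min (m + 1 : ℝ) (n + 1)) (t₀ := 0)
      (fun _ _ => hF.lipschitzOnWith) ⟨by linarith, h0⟩
      (fun s hs => ⟨hβ m s ?_, trivial⟩) (fun s hs => ⟨hβ n s ?_, trivial⟩)
      ((hβ0 m).trans (hβ0 n).symm) (abs_lt.1 hr)
    · exact ⟨by linarith [hs.1, min_le_left (m + 1 : ℝ) (n + 1)],
        hs.2.trans_le (min_le_left _ _)⟩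
    · exact ⟨by linarith [hs.1, min_le_right (m + 1 : ℝ) (n + 1)],
        hs.2.trans_le (min_le_right _ _)⟩
  have hceil : ∀ t : ℝ, |t| < (⌈|t|⌉₊ : ℝ) + 1 := fun t =>
    (Nat.le_ceil _).trans_lt (lt_add_one _)
  refine ⟨fun t => β ⌈|t|⌉₊ t, hβ0 _, fun t => ?_⟩
  refine (hβ ⌈|t|⌉₊ t (abs_lt.1 (hceil t))).congr_of_eventuallyEq ?_
  have : ∀ᶠ s in nhds t, |s| < (⌈|t|⌉₊ : ℝ) + 1 :=
    continuous_abs.continuousAt.eventually_lt continuousAt_const (hceil t)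
  filter_upwards [this] with s hs
  exact agree _ _ s (hceil s) hs

/-! ### The truncated system and its orbits -/

/-- The field `(u, p) ↦ (p, c p - u (1 - u))` with `u` replaced by its projection to `[0, 1]` and
`p` by its projection to `[-20, 20]`. -/
noncomputable def clampedField (c : ℝ) (x : ℝ × ℝ) : ℝ × ℝ :=
  (max (-20) (min x.2 20),
    c * max (-20) (min x.2 20) - max 0 (min x.1 1) * (1 - max 0 (min x.1 1)))

lemma abs_clamp_sub_le (a b x y : ℝ) :
    |max a (min x b) - max a (min y b)| ≤ |x - y| :=
  (abs_max_sub_max_le_max _ _ _ _).trans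
    (max_le (by simp) ((abs_min_sub_min_le_max _ _ _ _).trans (by simp)))

lemma clampedField_lipschitz {c : ℝ} (hc0 : 0 ≤ c) (hc2 : c < 2) :
    LipschitzWith 3 (clampedField c) := by
  refine LipschitzWith.of_dist_le_mul fun x y => ?_
  have h1 : |x.1 - y.1| ≤ dist x y := by
    rw [Prod.dist_eq, ← Real.dist_eq]; exact le_max_left _ _
  have h2 : |x.2 - y.2| ≤ dist x y := by
    rw [Prod.dist_eq, ← Real.dist_eq]; exact le_max_right _ _
  have hd : 0 ≤ dist x y := dist_nonneg
  have k2 := (abs_clamp_sub_le (-20) 20 x.2 y.2).trans h2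
  have k1 := (abs_clamp_sub_le 0 1 x.1 y.1).trans h1
  rw [Prod.dist_eq, Real.dist_eq, Real.dist_eq]
  simp only [clampedField]
  have a0 : 0 ≤ max 0 (min x.1 1) := le_max_left _ _
  have a1 : max 0 (min x.1 1) ≤ 1 := max_le zero_le_one (min_le_right _ _)
  have b0 : 0 ≤ max 0 (min y.1 1) := le_max_left _ _
  have b1 : max 0 (min y.1 1) ≤ 1 := max_le zero_le_one (min_le_right _ _)
  generalize max 0 (min x.1 1) = a at *
  generalize max 0 (min y.1 1) = b at *
  generalize max (-20) (min x.2 20) = p at *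
  generalize max (-20) (min y.2 20) = q at *
  generalize dist x y = d at *
  refine max_le (by norm_num; linarith) ?_
  have e : c * p - a * (1 - a) - (c * q - b * (1 - b)) = c * (p - q) + (a - b) * (a + b - 1) := by
    ring
  have f1 : |c * (p - q)| ≤ 2 * d := by
    rw [abs_mul, abs_of_nonneg hc0]
    exact mul_le_mul hc2.le k2 (abs_nonneg _) (by norm_num)
  have f2 : |(a - b) * (a + b - 1)| ≤ d * 1 := by
    rw [abs_mul]
    exact mul_le_mul k1 (abs_le.2 ⟨by linarith, by linarith⟩) (abs_nonneg _) hd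
  rw [e]
  have := abs_add_le (c * (p - q)) ((a - b) * (a + b - 1))
  norm_num
  linarith

lemma clampedField_norm_le {c : ℝ} (hc0 : 0 ≤ c) (hc2 : c < 2) (x : ℝ × ℝ) :
    ‖clampedField c x‖ ≤ (60 : NNReal) := by
  have p1 : -20 ≤ max (-20) (min x.2 20) := le_max_left _ _
  have p2 : max (-20) (min x.2 20) ≤ 20 := max_le (by norm_num) (min_le_right _ _)
  have a0 : 0 ≤ max 0 (min x.1 1) := le_max_left _ _
  have a1 : max 0 (min x.1 1) ≤ 1 := max_le zero_le_one (min_le_right _ _)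
  simp only [clampedField, Prod.norm_def, Real.norm_eq_abs]
  generalize max 0 (min x.1 1) = a at *
  generalize max (-20) (min x.2 20) = p at *
  norm_num
  constructor <;> rw [abs_le] <;> constructor <;> nlinarith

/-- `x = (u, p)` is a solution of the truncated system, on all of `ℝ`, starting at `(0, a)`. -/
structure Orbit (c a : ℝ) (x : ℝ → ℝ × ℝ) : Prop where
  init : x 0 = (0, a)
  deriv : ∀ t, HasDerivAt x (clampedField c (x t)) t

lemma exists_orbit {c : ℝ} (hc0 : 0 ≤ c) (hc2 : c < 2) (a : ℝ) : ∃ x, Orbit c a x := by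
  obtain ⟨x, h1, h2⟩ := exists_global_solution (clampedField_lipschitz hc0 hc2)
    (clampedField_norm_le hc0 hc2) (0, a)
  exact ⟨x, h1, h2⟩

lemma Orbit.continuous {c a : ℝ} {x : ℝ → ℝ × ℝ} (h : Orbit c a x) : Continuous x :=
  continuous_iff_continuousAt.2 fun t => (h.deriv t).continuousAt

/-- Lipschitz dependence on the initial slope, by Grönwall's inequality. -/
lemma Orbit.dist_le {c : ℝ} (hc0 : 0 ≤ c) (hc2 : c < 2) {a b : ℝ} {x y : ℝ → ℝ × ℝ}
    (hx : Orbit c a x) (hy : Orbit c b y) {T t : ℝ} (ht0 : 0 ≤ t) (htT : t ≤ T) :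
    dist (x t) (y t) ≤ |a - b| * Real.exp (3 * T) := by
  have h0 : dist (x 0) (y 0) ≤ |a - b| := by
    rw [hx.init, hy.init, Prod.dist_eq]; simp [Real.dist_eq]
  have := dist_le_of_trajectories_ODE (v := fun _ => clampedField c) (a := 0) (b := T)
    (fun _ => clampedField_lipschitz hc0 hc2) hx.continuous.continuousOn
    (fun t _ => (hx.deriv t).hasDerivWithinAt) hy.continuous.continuousOn
    (fun t _ => (hy.deriv t).hasDerivWithinAt) h0 t ⟨ht0, htT⟩
  refine this.trans ?_
  gcongr
  norm_num; linarith

lemma Orbit.deriv_fst {c a : ℝ} {x : ℝ → ℝ × ℝ} (h : Orbit c a x) (t : ℝ) :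
    HasDerivAt (fun s => (x s).1) (max (-20) (min (x t).2 20)) t := by
  exact hasFDerivAt_fst.comp_hasDerivAt t (h.deriv t)

lemma Orbit.deriv_snd {c a : ℝ} {x : ℝ → ℝ × ℝ} (h : Orbit c a x) (t : ℝ) :
    HasDerivAt (fun s => (x s).2) (c * max (-20) (min (x t).2 20)
      - max 0 (min (x t).1 1) * (1 - max 0 (min (x t).1 1))) t := by
  exact hasFDerivAt_snd.comp_hasDerivAt t (h.deriv t)

/-! ### Wave profiles and their uniqueness -/

/-- A spreading wave in the reversed variable `t = -z ≥ 0`, written as a first-order system with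
`p = u'`. The equations are only required for `t > 0`. -/
structure Profile (c : ℝ) (u p : ℝ → ℝ) : Prop where
  cont : ContinuousOn u (Ici 0)
  zero : u 0 = 0
  deriv_u : ∀ t > 0, HasDerivAt u (p t) t
  deriv_p : ∀ t > 0, HasDerivAt p (c * p t - u t * (1 - u t)) t
  pos : ∀ t > 0, 0 < p t
  lim_u : Tendsto u atTop (nhds 1)
  lim_p : Tendsto p atTop (nhds 0)

namespace Profile
variable {c : ℝ} {u p : ℝ → ℝ}

lemma strictMonoOn (h : Profile c u p) : StrictMonoOn u (Ici 0) :=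
  strictMonoOn_of_deriv_pos (convex_Ici 0) h.cont fun t ht => by
    rw [interior_Ici] at ht
    rw [(h.deriv_u t ht).deriv]; exact h.pos t ht

lemma mem_Ioo (h : Profile c u p) {t : ℝ} (ht : 0 < t) : u t ∈ Ioo (0 : ℝ) 1 := by
  refine ⟨?_, ?_⟩
  · rw [← h.zero]; exact h.strictMonoOn self_mem_Ici ht.le ht
  · have h1 : u t < u (t + 1) :=
      h.strictMonoOn ht.le (by simp only [mem_Ici]; linarith) (by linarith)
    refine h1.trans_le (ge_of_tendsto h.lim_u ?_)
    filter_upwards [eventually_ge_atTop (t + 1)] with s hs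
    exact h.strictMonoOn.monotoneOn (by simp only [mem_Ici]; linarith)
      (by simp only [mem_Ici]; linarith) hs

/-- The inverse function `τ : (0, 1) → (0, ∞)` of a profile. -/
lemma exists_inverse (h : Profile c u p) : ∃ τ : ℝ → ℝ,
    (∀ x ∈ Ioo (0 : ℝ) 1, 0 < τ x ∧ u (τ x) = x ∧ HasDerivAt τ (p (τ x))⁻¹ x) ∧
    Tendsto τ (nhdsWithin 0 (Ioi 0)) (nhds 0) ∧ Tendsto τ (nhdsWithin 1 (Iio 1)) atTop := by
  have ex : ∀ x ∈ Ioo (0 : ℝ) 1, ∃ t, 0 < t ∧ u t = x := by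
    intro x hx
    obtain ⟨T, hT0, hT⟩ := ((eventually_ge_atTop (0 : ℝ)).and
      (h.lim_u.eventually (lt_mem_nhds hx.2))).exists
    obtain ⟨t, ht, hut⟩ := intermediate_value_Icc hT0 (h.cont.mono Icc_subset_Ici_self)
      ⟨h.zero.le.trans hx.1.le, hT.le⟩
    refine ⟨t, ht.1.lt_of_ne ?_, hut⟩
    rintro rfl
    rw [h.zero] at hut
    exact hx.1.ne hut
  choose! τ hτ0 hτ using ex
  have lt_tau : ∀ b x, 0 ≤ b → x ∈ Ioo (0 : ℝ) 1 → u b < x → b < τ x := fun b x hb hx hlt =>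
    (h.strictMonoOn.lt_iff_lt hb (hτ0 x hx).le).1 (by rwa [hτ x hx])
  have tau_lt : ∀ b x, 0 ≤ b → x ∈ Ioo (0 : ℝ) 1 → x < u b → τ x < b := fun b x hb hx hlt =>
    (h.strictMonoOn.lt_iff_lt (hτ0 x hx).le hb).1 (by rwa [hτ x hx])
  refine ⟨τ, fun x hx => ⟨hτ0 x hx, hτ x hx, ?_⟩, ?_, ?_⟩
  · have hnear : ∀ᶠ y in nhds x, y ∈ Ioo (0 : ℝ) 1 := isOpen_Ioo.mem_nhds hx
    refine HasDerivAt.of_local_left_inverse ?_ (h.deriv_u _ (hτ0 x hx))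
      (h.pos _ (hτ0 x hx)).ne' (hnear.mono hτ)
    refine tendsto_order.2 ⟨fun b hb => ?_, fun b hb => ?_⟩
    · rcases lt_or_ge b 0 with hb0 | hb0
      · filter_upwards [hnear] with y hy using hb0.trans (hτ0 y hy)
      · have : u b < x := by
          rw [← hτ x hx]; exact h.strictMonoOn hb0 (hτ0 x hx).le hb
        filter_upwards [hnear, lt_mem_nhds this] with y hy hy' using lt_tau b y hb0 hy hy'
    · have hb0 : 0 ≤ b := (hτ0 x hx).le.trans hb.le
      have : x < u b := by
        rw [← hτ x hx]; exact h.strictMonoOn (hτ0 x hx).le hb0 hb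
      filter_upwards [hnear, gt_mem_nhds this] with y hy hy' using tau_lt b y hb0 hy hy'
  · refine tendsto_order.2 ⟨fun b hb => ?_, fun b hb => ?_⟩
    · filter_upwards [Ioo_mem_nhdsGT (zero_lt_one' ℝ)] with y hy using hb.trans (hτ0 y hy)
    · filter_upwards [Ioo_mem_nhdsGT (zero_lt_one' ℝ), Ioo_mem_nhdsGT (h.mem_Ioo hb).1]
        with y hy hy' using tau_lt b y hb.le hy hy'.2
  · refine tendsto_atTop.2 fun b => ?_
    have hb : 0 < max b 1 := lt_max_of_lt_right one_pos
    filter_upwards [Ioo_mem_nhdsLT (zero_lt_one' ℝ), Ioo_mem_nhdsLT (h.mem_Ioo hb).2]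
      with y hy hy' using (le_max_left b 1).trans (lt_tau _ y hb.le hy hy'.1).le

/-- Two profiles of the same speed agree. -/
lemma eqOn {v q : ℝ → ℝ} (hu : Profile c u p) (hv : Profile c v q) :
    EqOn u v (Ici 0) := by
  obtain ⟨τ, hτ, hτ0, hτ1⟩ := hu.exists_inverse
  obtain ⟨σ, hσ, hσ0, hσ1⟩ := hv.exists_inverse
  have hP : ∀ x ∈ Ioo (0 : ℝ) 1, HasDerivAt (fun y => p (τ y))
      ((c * p (τ x) - x * (1 - x)) * (p (τ x))⁻¹) x := fun x hx => by
    obtain ⟨h0, h1, h2⟩ := hτ x hx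
    have := (hu.deriv_p _ h0).comp x h2
    rwa [h1] at this
  have hQ : ∀ x ∈ Ioo (0 : ℝ) 1, HasDerivAt (fun y => q (σ y))
      ((c * q (σ x) - x * (1 - x)) * (q (σ x))⁻¹) x := fun x hx => by
    obtain ⟨h0, h1, h2⟩ := hσ x hx
    have := (hv.deriv_p _ h0).comp x h2
    rwa [h1] at this
  have hE : ∀ x ∈ Ioo (0 : ℝ) 1, HasDerivAt (fun y => (p (τ y) - q (σ y)) ^ 2)
      (2 * (x * (1 - x)) * (p (τ x) - q (σ x)) ^ 2 / (p (τ x) * q (σ x))) x := fun x hx => by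
    have hp := (hu.pos _ (hτ x hx).1).ne'
    have hq := (hv.pos _ (hσ x hx).1).ne'
    refine (((hP x hx).sub (hQ x hx)).pow 2).congr_deriv ?_
    simp only [Pi.sub_apply]
    field_simp
    push_cast
    ring
  have hmono : MonotoneOn (fun y => (p (τ y) - q (σ y)) ^ 2) (Ioo (0 : ℝ) 1) := by
    refine monotoneOn_of_deriv_nonneg (convex_Ioo 0 1)
      (fun x hx => (hE x hx).continuousAt.continuousWithinAt) ?_ ?_
    · rw [interior_Ioo]
      exact fun x hx => (hE x hx).differentiableAt.differentiableWithinAt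
    · rw [interior_Ioo]
      intro x hx
      rw [(hE x hx).deriv]
      have hp := hu.pos _ (hτ x hx).1
      have hq := hv.pos _ (hσ x hx).1
      have h1 : 0 < 1 - x := sub_pos.2 hx.2
      have h0 := hx.1
      positivity
  have hlim : Tendsto (fun y => (p (τ y) - q (σ y)) ^ 2) (nhdsWithin 1 (Iio 1)) (nhds 0) := by
    simpa using ((hu.lim_p.comp hτ1).sub (hv.lim_p.comp hσ1)).pow 2
  have heq : ∀ x ∈ Ioo (0 : ℝ) 1, p (τ x) = q (σ x) := by
    intro x hx
    have : (p (τ x) - q (σ x)) ^ 2 ≤ 0 := by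
      refine ge_of_tendsto hlim ?_
      filter_upwards [Ioo_mem_nhdsLT hx.2] with y hy
      exact hmono hx ⟨hx.1.trans hy.1, hy.2⟩ hy.1.le
    exact sub_eq_zero.1 (pow_eq_zero_iff two_ne_zero |>.1 (le_antisymm this (sq_nonneg _)))
  have hd : ∀ x ∈ Ioo (0 : ℝ) 1, HasDerivAt (fun y => τ y - σ y) 0 x := fun x hx => by
    have := (hτ x hx).2.2.sub (hσ x hx).2.2
    rwa [heq x hx, sub_self] at this
  have hts : ∀ x ∈ Ioo (0 : ℝ) 1, τ x = σ x := by
    intro x hx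
    have hconst : ∀ y ∈ Ioo (0 : ℝ) 1, τ y - σ y = τ x - σ x := fun y hy =>
      isOpen_Ioo.is_const_of_deriv_eq_zero isPreconnected_Ioo
        (fun z hz => (hd z hz).differentiableAt.differentiableWithinAt)
        (fun z hz => (hd z hz).deriv) hy hx
    have h1 : Tendsto (fun y => τ y - σ y) (nhdsWithin 0 (Ioi 0)) (nhds (τ x - σ x)) :=
      tendsto_const_nhds.congr' (by
        filter_upwards [Ioo_mem_nhdsGT (zero_lt_one' ℝ)] with y hy using (hconst y hy).symm)
    have h2 := tendsto_nhds_unique h1 (hτ0.sub hσ0)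
    linarith
  intro t ht
  rcases eq_or_lt_of_le (show (0 : ℝ) ≤ t from ht) with rfl | ht
  · rw [hu.zero, hv.zero]
  have hx := hu.mem_Ioo ht
  have h1 : τ (u t) = t := hu.strictMonoOn.injOn (hτ _ hx).1.le ht.le (hτ _ hx).2.1
  have h2 := (hσ _ hx).2.1
  rw [← hts _ hx, h1] at h2
  exact h2.symm

end Profile

/-! ### Shooting from `u = 0` -/

/-- The orbit with initial slope `a` turns back (`p < 0`) before `u` reaches `1`. -/
def Turns (c a : ℝ) : Prop :=
  ∃ x, Orbit c a x ∧ ∃ t ≥ 0, (x t).2 < 0 ∧ ∀ s ∈ Icc 0 t, (x s).1 < 1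

/-- The orbit with initial slope `a` crosses `u = 1` while still increasing. -/
def Escapes (c a : ℝ) : Prop :=
  ∃ x, Orbit c a x ∧ ∃ t ≥ 0, 1 < (x t).1 ∧ ∀ s ∈ Icc 0 t, 0 < (x s).2

lemma Orbit.eqOn {c : ℝ} (hc0 : 0 ≤ c) (hc2 : c < 2)
    {a : ℝ} {x y : ℝ → ℝ × ℝ} (hx : Orbit c a x) (hy : Orbit c a y) {t : ℝ}
    (ht : 0 ≤ t) : x t = y t := by
  have := hx.dist_le hc0 hc2 hy ht le_rfl
  rw [sub_self, abs_zero, zero_mul] at this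
  exact dist_le_zero.1 this

lemma Orbit.exists_near {c : ℝ} (hc0 : 0 ≤ c) (hc2 : c < 2)
    {a : ℝ} {x : ℝ → ℝ × ℝ} (hx : Orbit c a x) (T : ℝ) {ε : ℝ} (hε : 0 < ε) :
    ∃ δ > 0, ∀ b, dist b a < δ → ∃ y, Orbit c b y ∧ ∀ t ∈ Icc 0 T,
      |(y t).1 - (x t).1| < ε ∧ |(y t).2 - (x t).2| < ε := by
  have hE := Real.exp_pos (3 * T)
  refine ⟨ε / Real.exp (3 * T), by positivity, fun b hb => ?_⟩
  obtain ⟨y, hy⟩ := exists_orbit hc0 hc2 b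
  refine ⟨y, hy, fun t ht => ?_⟩
  have h1 := hy.dist_le hc0 hc2 hx ht.1 ht.2
  rw [Real.dist_eq, lt_div_iff₀ hE] at hb
  have h2 := h1.trans_lt hb
  rw [Prod.dist_eq, Real.dist_eq, Real.dist_eq] at h2
  exact max_lt_iff.1 h2

lemma isOpen_turns {c : ℝ} (hc0 : 0 ≤ c) (hc2 : c < 2) : IsOpen {a | Turns c a} := by
  refine Metric.isOpen_iff.2 ?_
  rintro a ⟨x, hx, t, ht, hp, hu⟩
  obtain ⟨m, hm, hmax⟩ := isCompact_Icc.exists_isMaxOn (nonempty_Icc.2 ht)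
    (continuous_fst.comp hx.continuous).continuousOn
  have hum := hu m hm
  obtain ⟨δ, hδ, H⟩ := hx.exists_near hc0 hc2 t (ε := min (1 - (x m).1) (-(x t).2))
    (lt_min (by linarith) (by linarith))
  refine ⟨δ, hδ, fun b hb => ?_⟩
  obtain ⟨y, hy, hyx⟩ := H b hb
  refine ⟨y, hy, t, ht, ?_, fun s hs => ?_⟩
  · have := (abs_lt.1 ((hyx t ⟨ht, le_rfl⟩).2.trans_le (min_le_right _ _))).2
    linarith
  · have h1 := (abs_lt.1 ((hyx s hs).1.trans_le (min_le_left _ _))).2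
    have h2 : (x s).1 ≤ (x m).1 := hmax hs
    linarith

lemma isOpen_escapes {c : ℝ} (hc0 : 0 ≤ c) (hc2 : c < 2) : IsOpen {a | Escapes c a} := by
  refine Metric.isOpen_iff.2 ?_
  rintro a ⟨x, hx, t, ht, hu, hp⟩
  obtain ⟨m, hm, hmin⟩ := isCompact_Icc.exists_isMinOn (nonempty_Icc.2 ht)
    (continuous_snd.comp hx.continuous).continuousOn
  have hpm := hp m hm
  obtain ⟨δ, hδ, H⟩ := hx.exists_near hc0 hc2 t (ε := min ((x m).2) ((x t).1 - 1))
    (lt_min (by linarith) (by linarith))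
  refine ⟨δ, hδ, fun b hb => ?_⟩
  obtain ⟨y, hy, hyx⟩ := H b hb
  refine ⟨y, hy, t, ht, ?_, fun s hs => ?_⟩
  · have := (abs_lt.1 ((hyx t ⟨ht, le_rfl⟩).1.trans_le (min_le_right _ _))).1
    linarith
  · have h1 := (abs_lt.1 ((hyx s hs).2.trans_le (min_le_left _ _))).1
    have h2 : (x m).2 ≤ (x s).2 := hmin hs
    linarith

lemma not_turns_and_escapes {c : ℝ} (hc0 : 0 ≤ c) (hc2 : c < 2)
    {a : ℝ} (hT : Turns c a) (hE : Escapes c a) : False := by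
  obtain ⟨x, hx, t, ht, hp, hu⟩ := hT
  obtain ⟨y, hy, s, hs, hv, hq⟩ := hE
  rcases le_total t s with h | h
  · have := hq t ⟨ht, h⟩
    rw [← hx.eqOn hc0 hc2 hy ht] at this
    linarith
  · have := hu s ⟨hs, h⟩
    rw [hx.eqOn hc0 hc2 hy hs] at this
    linarith

/-- On `[0, 1 / 4]` the truncated field gives `p' ≥ -41`, hence `p ≥ 17 - 41 / 4 ≥ 6` and
`u (1 / 4) ≥ 3 / 2`. -/
lemma escapes_seventeen {c : ℝ} (hc0 : 0 ≤ c) (hc2 : c < 2) : Escapes c 17 := by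
  obtain ⟨x, hx⟩ := exists_orbit hc0 hc2 17
  have hp : ∀ s ∈ Icc (0 : ℝ) (1 / 4), 6 ≤ (x s).2 := by
    intro s hs
    have := (convex_Icc (0 : ℝ) (1 / 4)).mul_sub_le_image_sub_of_le_deriv (f := fun s => (x s).2)
      (C := -41) (fun t _ => (hx.deriv_snd t).continuousAt.continuousWithinAt)
      (fun t _ => (hx.deriv_snd t).differentiableAt.differentiableWithinAt)
      (fun t _ => by
        rw [(hx.deriv_snd t).deriv]
        have p1 : -20 ≤ max (-20) (min (x t).2 20) := le_max_left _ _
        have a0 : 0 ≤ max 0 (min (x t).1 1) := le_max_left _ _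
        have a1 : max 0 (min (x t).1 1) ≤ 1 := max_le zero_le_one (min_le_right _ _)
        generalize max 0 (min (x t).1 1) = a at *
        generalize max (-20) (min (x t).2 20) = p at *
        nlinarith) 0 ⟨le_rfl, by norm_num⟩ s hs hs.1
    rw [hx.init] at this
    simp only at this
    linarith [hs.2]
  refine ⟨x, hx, 1 / 4, by norm_num, ?_, fun s hs => by linarith [hp s hs]⟩
  have := (convex_Icc (0 : ℝ) (1 / 4)).mul_sub_le_image_sub_of_le_deriv (f := fun s => (x s).1)
      (C := 6) (fun t _ => (hx.deriv_fst t).continuousAt.continuousWithinAt)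
      (fun t _ => (hx.deriv_fst t).differentiableAt.differentiableWithinAt)
      (fun t ht => by
        rw [(hx.deriv_fst t).deriv]
        exact le_max_of_le_right (le_min (hp t (interior_subset ht)) (by norm_num)))
      0 ⟨le_rfl, by norm_num⟩ (1 / 4) ⟨by norm_num, le_rfl⟩ (by norm_num)
  rw [hx.init] at this
  simp only at this
  linarith

/-- Orbits of small initial slope turn back. Otherwise `0 ≤ u < d` on `[0, π / ω]`, where
`ω ^ 2 = d = (1 - c ^ 2 / 4) / 2`. Then `h = exp (-c t / 2) u` satisfies `h'' ≤ -ω ^ 2 h`, so the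
Wronskian `h' sin (ω t) - ω h cos (ω t)` is nonincreasing from `0`, which forces `h (π / ω) ≤ 0`. -/
lemma exists_turns {c : ℝ} (hc0 : 0 ≤ c) (hc2 : c < 2) : ∃ a, 0 < a ∧ a < 1 ∧ Turns c a := by
  have hd : 0 < (1 - c ^ 2 / 4) / 2 := by nlinarith
  have hd1 : (1 - c ^ 2 / 4) / 2 ≤ 1 / 2 := by nlinarith [sq_nonneg c]
  set d := (1 - c ^ 2 / 4) / 2 with hddef
  set ω := Real.sqrt d with hω
  have hω0 : 0 < ω := Real.sqrt_pos.2 hd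
  have hω2 : ω ^ 2 = d := Real.sq_sqrt hd.le
  set T := Real.pi / ω with hT
  have hT0 : 0 < T := by positivity
  have hzero : Orbit c 0 (fun _ => (0, 0)) := ⟨rfl, fun t => by
    have : clampedField c (0, 0) = 0 := by simp [clampedField]
    simpa [this] using hasDerivAt_const t ((0 : ℝ), (0 : ℝ))⟩
  obtain ⟨δ, hδ, H⟩ := hzero.exists_near hc0 hc2 T hd
  have hm : 0 < min δ 1 := lt_min hδ one_pos
  set a := min δ 1 / 2 with ha
  have ha0 : 0 < a := by positivity
  refine ⟨a, ha0, by linarith [min_le_right δ 1], ?_⟩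
  obtain ⟨x, hx, hnear⟩ := H a (by
    rw [Real.dist_eq, sub_zero, abs_of_pos ha0]; linarith [min_le_left δ 1])
  simp only [sub_zero, abs_lt] at hnear
  by_contra hnot
  have hp : ∀ t ∈ Icc 0 T, 0 ≤ (x t).2 := by
    intro t ht
    by_contra hneg
    exact hnot ⟨x, hx, t, ht.1, not_le.1 hneg, fun s hs => by
      linarith [(hnear s ⟨hs.1, hs.2.trans ht.2⟩).1.2]⟩
  have hcl : ∀ t ∈ Icc 0 T, max (-20) (min (x t).2 20) = (x t).2 := fun t ht => by
    rw [min_eq_left (by linarith [(hnear t ht).2.2]), max_eq_right (by linarith [hp t ht])]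
  have hu' : ∀ t ∈ Icc 0 T, HasDerivAt (fun s => (x s).1) (x t).2 t := fun t ht => by
    have := hx.deriv_fst t
    rwa [hcl t ht] at this
  have hmono : MonotoneOn (fun s => (x s).1) (Icc 0 T) := by
    refine monotoneOn_of_deriv_nonneg (convex_Icc 0 T)
      (fun t ht => (hu' t ht).continuousAt.continuousWithinAt)
      (fun t ht => (hu' t (interior_subset ht)).differentiableAt.differentiableWithinAt)
      (fun t ht => ?_)
    rw [(hu' t (interior_subset ht)).deriv]
    exact hp t (interior_subset ht)
  have hu0 : ∀ t ∈ Icc 0 T, 0 ≤ (x t).1 := fun t ht => by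
    have := hmono ⟨le_rfl, hT0.le⟩ ht ht.1
    simpa [hx.init] using this
  have hp' : ∀ t ∈ Icc 0 T,
      HasDerivAt (fun s => (x s).2) (c * (x t).2 - (x t).1 * (1 - (x t).1)) t := fun t ht => by
    have := hx.deriv_snd t
    rwa [hcl t ht, min_eq_left (by linarith [(hnear t ht).1.2]), max_eq_right (hu0 t ht)] at this
  -- The Wronskian of `exp (-c t / 2) u` and `sin (ω t)`.
  have hW : ∀ t ∈ Icc 0 T, HasDerivAt (fun s => Real.exp (-c / 2 * s) *
      (((x s).2 - c / 2 * (x s).1) * Real.sin (ω * s) - ω * (x s).1 * Real.cos (ω * s)))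
      (Real.exp (-c / 2 * t) * Real.sin (ω * t) * (x t).1 * ((x t).1 - d)) t := fun t ht => by
    have e := ((hasDerivAt_id t).const_mul (-c / 2)).exp
    have s := ((hasDerivAt_id t).const_mul ω).sin
    have k := ((hasDerivAt_id t).const_mul ω).cos
    refine (e.mul ((((hp' t ht).sub ((hu' t ht).const_mul (c / 2))).mul s).sub
      (((hu' t ht).const_mul ω).mul k))).congr_deriv ?_
    simp only [id, Pi.sub_apply, Pi.mul_apply]
    have : c ^ 2 = 4 - 8 * ω ^ 2 := by rw [hω2, hddef]; ring
    rw [← hω2]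
    linear_combination (Real.exp (-c / 2 * t) * Real.sin (ω * t) * (x t).1 / 4) * this
  have hanti := antitoneOn_of_deriv_nonpos (convex_Icc 0 T)
    (fun t ht => (hW t ht).continuousAt.continuousWithinAt)
    (fun t ht => (hW t (interior_subset ht)).differentiableAt.differentiableWithinAt)
    (fun t ht => by
      have ht := interior_subset ht
      rw [(hW t ht).deriv]
      have hs : 0 ≤ Real.sin (ω * t) := by
        refine Real.sin_nonneg_of_nonneg_of_le_pi (mul_nonneg hω0.le ht.1) ?_
        have := (le_div_iff₀ hω0).1 ht.2
        linarith
      refine mul_nonpos_of_nonneg_of_nonpos ?_ (by linarith [(hnear t ht).1.2])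
      exact mul_nonneg (mul_nonneg (Real.exp_pos _).le hs) (hu0 t ht))
    ⟨le_rfl, hT0.le⟩ ⟨hT0.le, le_rfl⟩ hT0.le
  have hωT : ω * T = Real.pi := by rw [hT]; field_simp
  simp only [hωT, Real.sin_pi, Real.cos_pi, mul_zero, Real.sin_zero, hx.init] at hanti
  have hexp := Real.exp_pos (-c / 2 * T)
  have huT : (x T).1 ≤ 0 := by
    by_contra hpos
    have : 0 < Real.exp (-c / 2 * T) * (ω * (x T).1) :=
      mul_pos hexp (mul_pos hω0 (not_le.1 hpos))
    linarith
  -- So `u` vanishes on `[0, T]`, against `u' 0 = a > 0`.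
  have hconst : ∀ t ∈ Icc 0 T, (x t).1 = 0 := fun t ht =>
    le_antisymm ((hmono ht ⟨hT0.le, le_rfl⟩ ht.2).trans huT) (hu0 t ht)
  have h0 : (0 : ℝ) ∈ Icc 0 T := ⟨le_rfl, hT0.le⟩
  have h1 : HasDerivWithinAt (fun s => (x s).1) 0 (Icc 0 T) 0 :=
    (hasDerivWithinAt_const 0 _ 0).congr hconst (hconst 0 h0)
  have h2 := (uniqueDiffOn_Icc hT0 0 h0).eq_deriv _ h1 (hu' 0 h0).hasDerivWithinAt
  rw [hx.init] at h2
  exact ha0.ne h2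

lemma eventually_gt_of_deriv_pos {f : ℝ → ℝ} {f' t : ℝ} (hf : HasDerivAt f f' t) (h : 0 < f') :
    ∀ᶠ s in nhdsWithin t (Ioi t), f t < f s := by
  have h1 := (hasDerivWithinAt_iff_tendsto_slope' (s := Ioi t) (by simp)).1 hf.hasDerivWithinAt
  filter_upwards [h1.eventually (lt_mem_nhds h), self_mem_nhdsWithin] with s hs hts
  have hts : t < s := hts
  rw [slope_def_field, div_pos_iff_of_pos_right (sub_pos.2 hts)] at hs
  linarith

/-- If a function and its derivative both converge at infinity, the derivative tends to `0`. -/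
lemma limit_deriv_eq_zero {g g' : ℝ → ℝ} {l d : ℝ} (hg : ∀ t ≥ 0, HasDerivAt g (g' t) t)
    (hl : Tendsto g atTop (nhds l)) (hd : Tendsto g' atTop (nhds d)) : d = 0 := by
  have hmv : ∀ t : ℝ, ∃ s, 0 ≤ t → t < s ∧ g' s = g (t + 1) - g t := by
    intro t
    by_cases ht : 0 ≤ t
    · obtain ⟨s, hs, h⟩ := exists_hasDerivAt_eq_slope g g' (lt_add_one t)
        (fun s hs => (hg s (ht.trans hs.1)).continuousAt.continuousWithinAt)
        (fun s hs => hg s (ht.trans hs.1.le))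
      exact ⟨s, fun _ => ⟨hs.1, by simpa using h⟩⟩
    · exact ⟨0, fun h => absurd h ht⟩
  choose s hs using hmv
  have hsT : Tendsto s atTop atTop := by
    refine tendsto_atTop_mono' _ ?_ tendsto_id
    filter_upwards [eventually_ge_atTop 0] with t ht using (hs t ht).1.le
  have h1 : Tendsto (fun t => g (t + 1) - g t) atTop (nhds (l - l)) :=
    (hl.comp (tendsto_atTop_add_const_right _ _ tendsto_id)).sub hl
  have h2 : Tendsto (fun t => g (t + 1) - g t) atTop (nhds d) := by
    refine (hd.comp hsT).congr' ?_
    filter_upwards [eventually_ge_atTop 0] with t ht using (hs t ht).2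
  rw [tendsto_nhds_unique h2 h1, sub_self]

lemma exists_threshold {c : ℝ} (hc0 : 0 ≤ c) (hc2 : c < 2) :
    ∃ a, 0 < a ∧ a ≤ 17 ∧ ¬ Turns c a ∧ ¬ Escapes c a := by
  obtain ⟨a₀, h0, h1, hT⟩ := exists_turns hc0 hc2
  have hE := escapes_seventeen hc0 hc2
  by_contra! hall
  have hcover : Icc a₀ 17 ⊆ {a | Turns c a} ∪ {a | Escapes c a} := fun a ha => by
    by_cases hTa : Turns c a
    · exact Or.inl hTa
    · exact Or.inr (hall a (h0.trans_le ha.1) ha.2 hTa)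
  obtain ⟨a, -, hTa, hEa⟩ := isPreconnected_Icc _ _ (isOpen_turns hc0 hc2)
    (isOpen_escapes hc0 hc2) hcover ⟨a₀, ⟨le_rfl, by linarith⟩, hT⟩
    ⟨17, ⟨by linarith, le_rfl⟩, hE⟩
  exact not_turns_and_escapes hc0 hc2 hTa hEa

/-- If the slope `a` neither turns nor escapes, the orbit stays in `0 < p`, `u < 1`. At the first
exit time, the orbit is either on `p = 0`, `u < 1`, where `p' < 0` makes it turn, or on
`u = 1`, `p > 0`, where it escapes, or at the equilibrium `(1, 0)`, which no other orbit reaches. -/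
lemma Orbit.trapped {c : ℝ} (hc0 : 0 ≤ c) (hc2 : c < 2)
    {a : ℝ} {x : ℝ → ℝ × ℝ} (hx : Orbit c a x) (ha : 0 < a)
    (hT : ¬ Turns c a) (hE : ¬ Escapes c a) : ∀ t ≥ 0, 0 < (x t).2 ∧ (x t).1 < 1 := by
  by_contra! hbad
  have hc1 : Continuous fun t => (x t).1 := continuous_fst.comp hx.continuous
  have hc2' : Continuous fun t => (x t).2 := continuous_snd.comp hx.continuous
  set S : Set ℝ := {t | 0 ≤ t ∧ ((x t).2 ≤ 0 ∨ 1 ≤ (x t).1)} with hS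
  have hSne : S.Nonempty := by
    obtain ⟨t, ht, h⟩ := hbad
    refine ⟨t, ht, ?_⟩
    rcases le_or_gt (x t).2 0 with h' | h'
    · exact Or.inl h'
    · exact Or.inr (h h')
  have hScl : IsClosed S := (isClosed_le continuous_const continuous_id).inter
    ((isClosed_le hc2' continuous_const).union (isClosed_le continuous_const hc1))
  have hSbd : BddBelow S := ⟨0, fun t ht => ht.1⟩
  obtain ⟨ht0, hor⟩ : sInf S ∈ S := hScl.csInf_mem hSne hSbd
  set t₀ := sInf S with ht₀
  have hbefore : ∀ s, 0 ≤ s → s < t₀ → 0 < (x s).2 ∧ (x s).1 < 1 := by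
    intro s hs hst
    have : s ∉ S := fun hmem => absurd (csInf_le hSbd hmem) (not_le.2 hst)
    by_contra hcon
    refine this ⟨hs, ?_⟩
    by_contra! h
    exact hcon h
  have htpos : 0 < t₀ := by
    refine ht0.lt_of_ne fun h => ?_
    rw [← h, hx.init] at hor
    rcases hor with h | h <;> simp only at h <;> linarith
  have hleft : ∀ᶠ s in nhdsWithin t₀ (Iio t₀), 0 < (x s).2 ∧ (x s).1 < 1 := by
    filter_upwards [Ioo_mem_nhdsLT htpos] with s hs using hbefore s hs.1.le hs.2
  have hpge : 0 ≤ (x t₀).2 := ge_of_tendsto (hc2'.continuousAt.tendsto.mono_left nhdsWithin_le_nhds)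
    (hleft.mono fun s hs => hs.1.le)
  have hule : (x t₀).1 ≤ 1 := le_of_tendsto (hc1.continuousAt.tendsto.mono_left nhdsWithin_le_nhds)
    (hleft.mono fun s hs => hs.2.le)
  have hupos : 0 < (x t₀).1 := by
    have := strictMonoOn_of_deriv_pos (convex_Icc 0 t₀) hc1.continuousOn (fun s hs => by
      rw [interior_Icc] at hs
      rw [(hx.deriv_fst s).deriv]
      exact lt_max_of_lt_right (lt_min (hbefore s hs.1.le hs.2).1 (by norm_num)))
      ⟨le_rfl, ht0⟩ ⟨ht0, le_rfl⟩ htpos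
    simpa [hx.init] using this
  rcases hpge.eq_or_lt with hp | hp
  · rcases hule.eq_or_lt with hu | hu
    · have hconst : x = fun _ => ((1 : ℝ), (0 : ℝ)) :=
        ODE_solution_unique_univ (v := fun _ => clampedField c) (s := fun _ => univ) (t₀ := t₀)
          (fun _ => (clampedField_lipschitz hc0 hc2).lipschitzOnWith)
          (fun t => ⟨hx.deriv t, trivial⟩)
          (fun t => ⟨by
            have : clampedField c (1, 0) = 0 := by simp [clampedField]
            simpa [this] using hasDerivAt_const t ((1 : ℝ), (0 : ℝ)), trivial⟩)
          (Prod.ext hu hp.symm)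
      have := hx.init
      rw [hconst] at this
      simp at this
    · have hder : HasDerivAt (fun s => -(x s).2) ((x t₀).1 * (1 - (x t₀).1)) t₀ := by
        refine (hx.deriv_snd t₀).neg.congr_deriv ?_
        rw [← hp, min_eq_left hu.le, max_eq_right hupos.le]
        norm_num
      have h1 := eventually_gt_of_deriv_pos hder (mul_pos hupos (sub_pos.2 hu))
      have h2 : ∀ᶠ s in nhds t₀, (x s).1 < 1 := hc1.continuousAt.eventually_lt
        continuousAt_const hu
      obtain ⟨r, hr, hball⟩ := Metric.eventually_nhds_iff.1 h2
      obtain ⟨t₁, hneg, ht₁⟩ := (h1.and (Ioo_mem_nhdsGT (show t₀ < t₀ + r by linarith))).exists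
      refine hT ⟨x, hx, t₁, ht0.trans ht₁.1.le, by linarith, fun s hs => ?_⟩
      rcases lt_or_ge s t₀ with hlt | hge
      · exact (hbefore s hs.1 hlt).2
      · exact hball (by rw [Real.dist_eq, abs_of_nonneg (by linarith)]; linarith [hs.2, ht₁.2])
  · have hu : (x t₀).1 = 1 := le_antisymm hule (hor.resolve_left (not_le.2 hp))
    have h1 := eventually_gt_of_deriv_pos (hx.deriv_fst t₀)
      (lt_max_of_lt_right (lt_min hp (by norm_num)))
    have h2 : ∀ᶠ s in nhds t₀, 0 < (x s).2 := continuousAt_const.eventually_lt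
      hc2'.continuousAt hp
    obtain ⟨r, hr, hball⟩ := Metric.eventually_nhds_iff.1 h2
    obtain ⟨t₁, hgt, ht₁⟩ := (h1.and (Ioo_mem_nhdsGT (show t₀ < t₀ + r by linarith))).exists
    refine hE ⟨x, hx, t₁, ht0.trans ht₁.1.le, by linarith, fun s hs => ?_⟩
    rcases lt_or_ge s t₀ with hlt | hge
    · exact (hbefore s hs.1 hlt).1
    · exact hball (by rw [Real.dist_eq, abs_of_nonneg (by linarith)]; linarith [hs.2, ht₁.2])

/-- The equations are stated up to `t = 0`, as needed for the one-sided derivatives of the wave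
at `z = 0`. -/
lemma exists_profile {c : ℝ} (hc0 : 0 ≤ c) (hc2 : c < 2) :
    ∃ u p : ℝ → ℝ, Profile c u p ∧ (∀ t ≥ 0, HasDerivAt u (p t) t) ∧
    ∀ t ≥ 0, HasDerivAt p (c * p t - u t * (1 - u t)) t := by
  obtain ⟨a, ha, ha17, hT, hE⟩ := exists_threshold hc0 hc2
  obtain ⟨x, hx⟩ := exists_orbit hc0 hc2 a
  have htrap := hx.trapped hc0 hc2 ha hT hE
  have hc1 : Continuous fun t => (x t).1 := continuous_fst.comp hx.continuous
  have hmono : StrictMonoOn (fun t => (x t).1) (Ici 0) :=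
    strictMonoOn_of_deriv_pos (convex_Ici 0) hc1.continuousOn fun t ht => by
      rw [interior_Ici] at ht
      rw [(hx.deriv_fst t).deriv]
      exact lt_max_of_lt_right (lt_min (htrap t (le_of_lt ht)).1 (by norm_num))
  have hu0 : ∀ t ≥ 0, 0 ≤ (x t).1 := fun t ht => by
    have := hmono.monotoneOn self_mem_Ici ht ht
    simpa [hx.init] using this
  -- In the truncated system too, `p - c u` is nonincreasing; hence `p ≤ 17 + c ≤ 20`.
  have hy' : ∀ t, HasDerivAt (fun s => (x s).2 - c * (x s).1)
      (-(max 0 (min (x t).1 1) * (1 - max 0 (min (x t).1 1)))) t := fun t =>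
    ((hx.deriv_snd t).sub ((hx.deriv_fst t).const_mul c)).congr_deriv (by ring)
  have hanti : Antitone (fun s => (x s).2 - c * (x s).1) := by
    refine antitone_of_deriv_nonpos (fun t => (hy' t).differentiableAt) fun t => ?_
    rw [(hy' t).deriv]
    have a0 : 0 ≤ max 0 (min (x t).1 1) := le_max_left _ _
    have a1 : max 0 (min (x t).1 1) ≤ 1 := max_le zero_le_one (min_le_right _ _)
    nlinarith
  have hp20 : ∀ t ≥ 0, (x t).2 ≤ 20 := fun t ht => by
    have h1 := hanti ht
    simp only [hx.init] at h1
    nlinarith [htrap t ht, hu0 t ht]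
  have hcl : ∀ t ≥ 0, max (-20) (min (x t).2 20) = (x t).2 := fun t ht => by
    rw [min_eq_left (hp20 t ht), max_eq_right (by linarith [htrap t ht])]
  have hu' : ∀ t ≥ 0, HasDerivAt (fun s => (x s).1) (x t).2 t := fun t ht => by
    have := hx.deriv_fst t
    rwa [hcl t ht] at this
  have hp' : ∀ t ≥ 0,
      HasDerivAt (fun s => (x s).2) (c * (x t).2 - (x t).1 * (1 - (x t).1)) t := fun t ht => by
    have := hx.deriv_snd t
    rwa [hcl t ht, min_eq_left (htrap t ht).2.le, max_eq_right (hu0 t ht)] at this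
  -- Monotone bounded functions converge, and the limit point must be an equilibrium.
  obtain ⟨l, hl⟩ : ∃ l, Tendsto (fun t => (x t).1) atTop (nhds l) := by
    have hm : Monotone fun t => (x (max t 0)).1 := fun s t hst =>
      hmono.monotoneOn (mem_Ici.2 (le_max_right s 0)) (mem_Ici.2 (le_max_right t 0))
        (max_le_max_right 0 hst)
    have hb : BddAbove (range fun t => (x (max t 0)).1) :=
      ⟨1, by rintro _ ⟨t, rfl⟩; exact (htrap _ (le_max_right _ _)).2.le⟩
    refine ⟨_, (tendsto_atTop_ciSup hm hb).congr' ?_⟩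
    filter_upwards [eventually_ge_atTop 0] with t ht
    rw [max_eq_left ht]
  obtain ⟨m, hm⟩ : ∃ m, Tendsto (fun t => (x t).2 - c * (x t).1) atTop (nhds m) := by
    refine ⟨_, tendsto_atTop_ciInf hanti ⟨-c, ?_⟩⟩
    rintro _ ⟨t, rfl⟩
    refine le_trans ?_ (hanti (le_max_left t 0))
    have := htrap (max t 0) (le_max_right _ _)
    simp only
    nlinarith
  have hplim : Tendsto (fun t => (x t).2) atTop (nhds (m + c * l)) :=
    (hm.add (hl.const_mul c)).congr fun t => by ring
  have hz := limit_deriv_eq_zero hu' hl hplim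
  rw [hz] at hplim
  have hl01 := limit_deriv_eq_zero hp' hplim
    ((hplim.const_mul c).sub (hl.mul (hl.const_sub 1)))
  have hlpos : 0 < l := by
    have h1 : (x 0).1 < (x 1).1 := hmono self_mem_Ici (by simp) one_pos
    rw [hx.init] at h1
    refine lt_of_lt_of_le h1 (ge_of_tendsto hl ?_)
    filter_upwards [eventually_ge_atTop 1] with t ht
    exact hmono.monotoneOn (by simp) (by simp only [mem_Ici]; linarith) ht
  have hl1 : l = 1 := by
    have : l * (1 - l) = 0 := by linarith
    rcases mul_eq_zero.1 this with h | h <;> linarith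
  rw [hl1] at hl
  exact ⟨_, _, ⟨hc1.continuousOn, by simp [hx.init], fun t ht => hu' t ht.le,
    fun t ht => hp' t ht.le, fun t ht => (htrap t ht.le).1, hl, hplim⟩, hu', hp'⟩

/-! ### From profiles to spreading waves -/

lemma Profile.of_isSpreadingWave {c : ℝ} {u : ℝ → ℝ} (h : IsSpreadingWave c u) :
    Profile c (fun t => u (-t)) (fun t => -derivWithin u (Iic 0) (-t)) := by
  obtain ⟨hC, hode, h0, hd, hl, hpos⟩ := h
  have hC1 : ContDiffOn ℝ 1 (derivWithin u (Iic 0)) (Iic 0) :=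
    ((contDiffOn_succ_iff_derivWithin (n := 1) (uniqueDiffOn_Iic 0)).1
      (by rwa [one_add_one_eq_two])).2.2
  have hu : ∀ z < (0 : ℝ), HasDerivAt u (derivWithin u (Iic 0) z) z := fun z hz =>
    ((hC.differentiableOn (by norm_num) z hz.le).hasDerivWithinAt).hasDerivAt (Iic_mem_nhds hz)
  have hv : ∀ z < (0 : ℝ), HasDerivAt (derivWithin u (Iic 0))
      (derivWithin (derivWithin u (Iic 0)) (Iic 0) z) z := fun z hz =>
    ((hC1.differentiableOn (by norm_num) z hz.le).hasDerivWithinAt).hasDerivAt (Iic_mem_nhds hz)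
  refine ⟨?_, by simpa using h0, fun t ht => ?_, fun t ht => ?_, fun t ht => ?_,
    hl.comp tendsto_neg_atTop_atBot, ?_⟩
  · exact hC.continuousOn.comp continuous_neg.continuousOn fun t ht => by
      simpa using ht
  · refine ((hu (-t) (by linarith)).comp t (hasDerivAt_neg t)).congr_deriv (by ring)
  · refine ((hv (-t) (by linarith)).comp t (hasDerivAt_neg t)).neg.congr_deriv ?_
    linarith [hode (-t) (by linarith)]
  · linarith [(hpos (-t) (by linarith)).2]
  · simpa using (hd.comp tendsto_neg_atTop_atBot).neg

lemma exists_isSpreadingWave {c : ℝ} (hc0 : 0 ≤ c) (hc2 : c < 2) :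
    ∃ u, IsSpreadingWave c u := by
  obtain ⟨u, p, h, hu, hp⟩ := exists_profile hc0 hc2
  have hU : ∀ z ≤ (0 : ℝ), HasDerivAt (fun z => u (-z)) (-p (-z)) z := fun z hz =>
    ((hu (-z) (by linarith)).comp z (hasDerivAt_neg z)).congr_deriv (by ring)
  have hP : ∀ z ≤ (0 : ℝ), HasDerivAt (fun z => -p (-z))
      (c * p (-z) - u (-z) * (1 - u (-z))) z := fun z hz =>
    ((hp (-z) (by linarith)).comp z (hasDerivAt_neg z)).neg.congr_deriv (by ring)
  have hd1 : EqOn (derivWithin (fun z => u (-z)) (Iic 0)) (fun z => -p (-z)) (Iic 0) :=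
    fun z hz => (hU z hz).hasDerivWithinAt.derivWithin (uniqueDiffOn_Iic 0 z hz)
  have hd2 : EqOn (derivWithin (fun z => -p (-z)) (Iic 0))
      (fun z => c * p (-z) - u (-z) * (1 - u (-z))) (Iic 0) :=
    fun z hz => (hP z hz).hasDerivWithinAt.derivWithin (uniqueDiffOn_Iic 0 z hz)
  have hUc : ContinuousOn (fun z => u (-z)) (Iic 0) := fun z hz =>
    (hU z hz).continuousAt.continuousWithinAt
  have hPc : ContinuousOn (fun z => p (-z)) (Iic 0) := fun z hz =>
    (hP z hz).continuousAt.continuousWithinAt.neg.congr (fun _ _ => by simp) (by simp)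
  refine ⟨fun z => u (-z), ?_, fun z hz => ?_, by simpa using h.zero, ?_,
    h.lim_u.comp tendsto_neg_atBot_atTop, fun z hz => ⟨(h.mem_Ioo (by linarith)).1, ?_⟩⟩
  · rw [← one_add_one_eq_two, contDiffOn_succ_iff_derivWithin (uniqueDiffOn_Iic 0)]
    refine ⟨fun z hz => (hU z hz).differentiableAt.differentiableWithinAt, by simp, ?_⟩
    refine ContDiffOn.congr ?_ hd1
    rw [contDiffOn_one_iff_derivWithin (uniqueDiffOn_Iic 0)]
    refine ⟨fun z hz => (hP z hz).differentiableAt.differentiableWithinAt, ?_⟩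
    exact ((hPc.const_smul c).sub (hUc.mul (continuousOn_const.sub hUc))).congr hd2
  · rw [derivWithin_congr hd1 (hd1 hz), hd2 hz, hd1 hz]
    ring
  · have := (h.lim_p.comp tendsto_neg_atBot_atTop).neg
    rw [neg_zero] at this
    refine this.congr' ?_
    filter_upwards [eventually_le_atBot 0] with z hz using (hd1 hz).symm
  · rw [hd1 hz.le]
    linarith [h.pos (-z) (by linarith)]

/-- For every `0 ≤ c < 2` there exists exactly one (as a function on
`(−∞, 0]`) twice continuously differentiable solution of the spreading-wave
boundary value problem. -/
theorem spreading_wave_exists_unique (c : ℝ) (hc0 : 0 ≤ c) (hc2 : c < 2) :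
    (∃ u : ℝ → ℝ, IsSpreadingWave c u) ∧
    (∀ u v : ℝ → ℝ, IsSpreadingWave c u → IsSpreadingWave c v → EqOn u v (Iic 0)) := by
  refine ⟨exists_isSpreadingWave hc0 hc2, fun u v hu hv z hz => ?_⟩
  have := (Profile.of_isSpreadingWave hu).eqOn (Profile.of_isSpreadingWave hv)
    (show -z ∈ Ici (0 : ℝ) by simpa using hz)
  simpa using this
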